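/- (Links in the lower model.) Fix a simplex σ ∈ Δ_n with ∏_{ν⊆σ} p_ν > 0 and let Δ' be the simplex on the vertex set [n] \ σ. Let λ̲ be the probability measure on simplicial subcomplexes L ⊆ Δ' defined by λ̲(L) = P̲_n({Y : σ ∈ Y and Lk_Y(σ) = L}) / P̲_n({Y : σ ∈ Y}). Then λ̲ is the lower measure on subcomplexes of Δ' with probability parameters p'_τ = p_τ · ∏_{ν⊆σ, ν≠∅} p_{ν∪τ} for τ ∈ Δ'. -/

import Mathlib

open Finset

/-- The full simplex `Δₙ`: all nonempty subsets of `[n] = {0,…,n}`. -/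
def simplexAll (n : ℕ) : Finset (Finset (Fin (n+1))) :=
  Finset.univ.filter fun σ => σ.Nonempty

/-- The boundary `∂Δₙ`: all nonempty proper subsets of `[n]`. -/
def bdry (n : ℕ) : Finset (Finset (Fin (n+1))) :=
  Finset.univ.filter fun σ => σ.Nonempty ∧ σ ≠ Finset.univ

/-- A hypergraph is a simplicial complex if it is closed under passing to
nonempty subsets. -/
def IsComplex {n : ℕ} (X : Finset (Finset (Fin (n+1)))) : Prop :=
  ∀ σ ∈ X, ∀ τ : Finset (Fin (n+1)), τ ⊆ σ → τ.Nonempty → τ ∈ X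

instance {n : ℕ} (X : Finset (Finset (Fin (n+1)))) : Decidable (IsComplex X) :=
  inferInstanceAs (Decidable (∀ σ ∈ X, ∀ τ : Finset (Fin (n+1)), τ ⊆ σ → τ.Nonempty → τ ∈ X))

/-- The dual hypergraph `c(X) = {σ̂ : σ ∈ ∂Δₙ, σ ∉ X}`, where `σ̂ = [n] \ σ`. -/
def dual {n : ℕ} (X : Finset (Finset (Fin (n+1)))) : Finset (Finset (Fin (n+1))) :=
  (bdry n \ X).image fun σ => σᶜ

/-- `X̄`: the smallest simplicial complex containing the hypergraph `X`. -/
def clUp {n : ℕ} (X : Finset (Finset (Fin (n+1)))) : Finset (Finset (Fin (n+1))) :=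
  Finset.univ.filter fun τ => τ.Nonempty ∧ ∃ σ ∈ X, τ ⊆ σ

/-- `X̲`: the largest simplicial complex contained in the hypergraph `X`. -/
def clLow {n : ℕ} (X : Finset (Finset (Fin (n+1)))) : Finset (Finset (Fin (n+1))) :=
  Finset.univ.filter fun τ => τ.Nonempty ∧ ∀ σ : Finset (Fin (n+1)), σ ⊆ τ → σ.Nonempty → σ ∈ X

/-- The Bernoulli measure with parameters `p` on hypergraphs contained in the
ambient set `S` of simplices: `P(X) = ∏_{σ∈X} p σ · ∏_{σ∈S\X} (1 - p σ)`. -/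
def bern {n : ℕ} (S : Finset (Finset (Fin (n+1)))) (p : Finset (Fin (n+1)) → ℝ)
    (X : Finset (Finset (Fin (n+1)))) : ℝ :=
  (∏ σ ∈ X, p σ) * ∏ σ ∈ S \ X, (1 - p σ)

/-- The upper measure: `P̄(Y) = Σ_{X ⊆ S, X̄ = Y} P(X)`. -/
def upperP {n : ℕ} (S : Finset (Finset (Fin (n+1)))) (p : Finset (Fin (n+1)) → ℝ)
    (Y : Finset (Finset (Fin (n+1)))) : ℝ :=
  ∑ X ∈ S.powerset.filter (fun X => clUp X = Y), bern S p X

/-- The lower measure: `P̲(Y) = Σ_{X ⊆ S, X̲ = Y} P(X)`. -/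
def lowerP {n : ℕ} (S : Finset (Finset (Fin (n+1)))) (p : Finset (Fin (n+1)) → ℝ)
    (Y : Finset (Finset (Fin (n+1)))) : ℝ :=
  ∑ X ∈ S.powerset.filter (fun X => clLow X = Y), bern S p X

/-- External simplices of `Y` relative to the ambient set `S`: simplices
`σ ∈ S` with `σ ∉ Y` but every nonempty proper subset of `σ` in `Y`. -/
def extSimp {n : ℕ} (S Y : Finset (Finset (Fin (n+1)))) : Finset (Finset (Fin (n+1))) :=
  S.filter fun σ => σ ∉ Y ∧ ∀ τ : Finset (Fin (n+1)), τ ⊂ σ → τ.Nonempty → τ ∈ Y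

/-- Maximal simplices of `Y`: simplices of `Y` not properly contained in another
simplex of `Y`. -/
def maxSimp {n : ℕ} (Y : Finset (Finset (Fin (n+1)))) : Finset (Finset (Fin (n+1))) :=
  Y.filter fun σ => ∀ τ ∈ Y, σ ⊆ τ → σ = τ

/-- The simplex `Δ'` spanned by the vertices `[n] \ σ`. -/
def delta' {n : ℕ} (σ : Finset (Fin (n+1))) : Finset (Finset (Fin (n+1))) :=
  (simplexAll n).filter fun τ => τ ⊆ σᶜ

/-- The link of `σ` in `Y`: all simplices `τ` disjoint from `σ` with
`σ ∪ τ ∈ Y`. -/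
def linkOf {n : ℕ} (σ : Finset (Fin (n+1))) (Y : Finset (Finset (Fin (n+1)))) :
    Finset (Finset (Fin (n+1))) :=
  (simplexAll n).filter fun τ => τ ⊆ σᶜ ∧ σ ∪ τ ∈ Y

/-- The conditional distribution of the link `Lk_Y(σ)` given `σ ∈ Y`, in the
lower model on `Δₙ` with parameters `p`. -/
noncomputable def lamLow {n : ℕ} (p : Finset (Fin (n+1)) → ℝ)
    (σ : Finset (Fin (n+1))) (L : Finset (Finset (Fin (n+1)))) : ℝ :=
  (∑ Y ∈ (simplexAll n).powerset.filter
      (fun Y => IsComplex Y ∧ σ ∈ Y ∧ linkOf σ Y = L),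
      lowerP (simplexAll n) p Y) /
  (∑ Y ∈ (simplexAll n).powerset.filter (fun Y => IsComplex Y ∧ σ ∈ Y),
      lowerP (simplexAll n) p Y)

/-!
A function on the subsets of a finite set is determined by its sums over the supersets of each
fixed set, so it suffices to compare such sums. For the lower measure they are products: a random
complex contains `W` exactly when the random hypergraph contains all faces of simplices of `W`.
The events `σ ∈ Y` and `W ⊆ Lk_Y(σ)` together say that `Y` contains `σ` and every `σ ∪ τ` with
`τ ∈ W`, and the complex generated by these simplices is the join of `σ` with the complex generated
by `W`. The product of the parameters over this join splits along `s ↦ s \ σ` into `∏_{ν ⊆ σ} p_ν`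
and one factor `p'_τ` for each simplex `τ` of the complex generated by `W`.
-/

lemma eq_of_sum_Icc_eq {α M : Type*} [PartialOrder α] [LocallyFiniteOrder α]
    [AddCancelCommMonoid M] {f g : α → M} {t : α}
    (h : ∀ a ≤ t, ∑ x ∈ Icc a t, f x = ∑ x ∈ Icc a t, g x) {a : α} (ha : a ≤ t) :
    f a = g a := by
  induction hs : Icc a t using Finset.strongInduction generalizing a with
  | H s ih =>
    subst hs
    have above : ∑ x ∈ Ioc a t, f x = ∑ x ∈ Ioc a t, g x := by
      refine sum_congr rfl fun x hx => ?_
      obtain ⟨hax, hxt⟩ := mem_Ioc.1 hx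
      exact ih _ (Icc_ssubset_Icc_left ha hax le_rfl) hxt rfl
    have total := h a ha
    rw [← add_sum_Ioc_eq_sum_Icc ha, ← add_sum_Ioc_eq_sum_Icc ha, above] at total
    exact add_right_cancel total

lemma sum_Icc_prod_mul_prod_sdiff {ι R : Type*} [DecidableEq ι] [CommSemiring R]
    {A S : Finset ι} (hA : A ⊆ S) (f g : ι → R) :
    ∑ X ∈ Icc A S, (∏ i ∈ X, f i) * ∏ i ∈ S \ X, g i
      = (∏ i ∈ A, f i) * ∏ i ∈ S \ A, (f i + g i) := by
  have disjoint_of_mem {B : Finset ι} (hB : B ∈ (S \ A).powerset) : Disjoint A B :=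
    disjoint_sdiff.mono_right (mem_powerset.1 hB)
  rw [Icc_eq_image_powerset hA, prod_add, mul_sum, sum_image]
  · refine sum_congr rfl fun B hB => ?_
    rw [prod_union (disjoint_of_mem hB), sdiff_sdiff_left, sup_eq_union, mul_assoc]
  · intro B hB C hC (hBC : A ∪ B = A ∪ C)
    rw [← union_sdiff_cancel_left (disjoint_of_mem hB), hBC,
      union_sdiff_cancel_left (disjoint_of_mem hC)]

section Complexes

variable {n : ℕ} {X Y W S T K : Finset (Finset (Fin (n + 1)))} {σ τ : Finset (Fin (n + 1))}
  {p : Finset (Fin (n + 1)) → ℝ}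

lemma mem_simplexAll : σ ∈ simplexAll n ↔ σ.Nonempty := by
  simp [simplexAll]

lemma mem_delta' : τ ∈ delta' σ ↔ τ.Nonempty ∧ τ ⊆ σᶜ := by
  simp [delta', mem_simplexAll]

lemma mem_clUp : τ ∈ clUp X ↔ τ.Nonempty ∧ ∃ σ ∈ X, τ ⊆ σ := by
  simp [clUp]

lemma mem_clLow :
    τ ∈ clLow X ↔ τ.Nonempty ∧ ∀ ν : Finset (Fin (n + 1)), ν ⊆ τ → ν.Nonempty → ν ∈ X := by
  simp [clLow]

lemma clLow_subset : clLow X ⊆ X := fun τ hτ =>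
  (mem_clLow.1 hτ).2 τ Subset.rfl (mem_clLow.1 hτ).1

lemma isComplex_clLow (X : Finset (Finset (Fin (n + 1)))) : IsComplex (clLow X) :=
  fun _ hσ _ hτσ hτ =>
    mem_clLow.2 ⟨hτ, fun ν hντ => (mem_clLow.1 hσ).2 ν (hντ.trans hτσ)⟩

lemma IsComplex.clUp_subset (hT : IsComplex T) (hW : W ⊆ T) : clUp W ⊆ T := fun τ hτ =>
  let ⟨hne, σ, hσ, hτσ⟩ := mem_clUp.1 hτ
  hT σ (hW hσ) τ hτσ hne

lemma isComplex_simplexAll (n : ℕ) : IsComplex (simplexAll n) :=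
  fun _ _ _ _ hτ => mem_simplexAll.2 hτ

lemma delta'_subset_simplexAll (σ : Finset (Fin (n + 1))) : delta' σ ⊆ simplexAll n :=
  filter_subset _ _

lemma isComplex_delta' (σ : Finset (Fin (n + 1))) : IsComplex (delta' σ) :=
  fun _ hτ _ hντ hν => mem_delta'.2 ⟨hν, hντ.trans (mem_delta'.1 hτ).2⟩

lemma linkOf_subset_delta' : linkOf σ Y ⊆ delta' σ := fun _ hτ =>
  let ⟨hne, hτσ, _⟩ := mem_filter.1 hτ
  mem_filter.2 ⟨hne, hτσ⟩

lemma subset_clLow_iff (hW : W ⊆ simplexAll n) : W ⊆ clLow X ↔ clUp W ⊆ X := by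
  constructor
  · exact fun h => ((isComplex_clLow X).clUp_subset h).trans clLow_subset
  · exact fun h σ hσ => mem_clLow.2
      ⟨mem_simplexAll.1 (hW hσ), fun τ hτσ hτ => h (mem_clUp.2 ⟨hτ, σ, hσ, hτσ⟩)⟩

lemma sum_Icc_bern (p : Finset (Fin (n + 1)) → ℝ) (hW : W ⊆ S) :
    ∑ X ∈ Icc W S, bern S p X = ∏ τ ∈ W, p τ := by
  simp only [bern, sum_Icc_prod_mul_prod_sdiff hW, add_sub_cancel, prod_const_one, mul_one]

lemma lowerP_eq_zero_of_not_isComplex (hY : ¬ IsComplex Y) : lowerP S p Y = 0 := by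
  have no_hypergraph : {X ∈ S.powerset | clLow X = Y} = ∅ :=
    filter_eq_empty_iff.2 fun X _ hX => hY (hX ▸ isComplex_clLow X)
  rw [lowerP, no_hypergraph, sum_empty]

lemma sum_Icc_lowerP (p : Finset (Fin (n + 1)) → ℝ) (hS : IsComplex S) (hSn : S ⊆ simplexAll n)
    (hW : W ⊆ S) : ∑ Y ∈ Icc W S, lowerP S p Y = ∏ τ ∈ clUp W, p τ := by
  have supersets : {X ∈ S.powerset | clLow X ∈ Icc W S} = Icc (clUp W) S := by
    ext X
    simp only [mem_filter, mem_powerset, mem_Icc, subset_clLow_iff (hW.trans hSn)]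
    exact ⟨fun h => ⟨h.2.1, h.1⟩, fun h => ⟨h.2, h.1, clLow_subset.trans h.2⟩⟩
  simp only [lowerP]
  rw [sum_fiberwise_eq_sum_filter, supersets, sum_Icc_bern p (hS.clUp_subset hW)]

lemma sum_isComplex_lowerP (p : Finset (Fin (n + 1)) → ℝ) (hW : W ⊆ simplexAll n) :
    ∑ Y ∈ (simplexAll n).powerset with IsComplex Y ∧ W ⊆ Y, lowerP (simplexAll n) p Y
      = ∏ τ ∈ clUp W, p τ := by
  rw [← sum_Icc_lowerP p (isComplex_simplexAll n) Subset.rfl hW]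
  refine sum_subset (fun Y hY => ?_) fun Y hY hY' =>
    lowerP_eq_zero_of_not_isComplex fun hYc => hY' ?_
  · simp only [mem_filter, mem_powerset] at hY
    exact mem_Icc.2 ⟨hY.2.2, hY.1⟩
  · obtain ⟨hWY, hYn⟩ := mem_Icc.1 hY
    exact mem_filter.2 ⟨mem_powerset.2 hYn, hYc, hWY⟩

/-- The nonempty faces of `σ`, that is, the closed simplex on the vertex set `σ`. -/
def faces (σ : Finset (Fin (n + 1))) : Finset (Finset (Fin (n + 1))) :=
  (simplexAll n).filter fun ν => ν ⊆ σ

/-- The parameter `p'_τ = p_τ · ∏_{∅ ≠ ν ⊆ σ} p_{ν ∪ τ}` of the link of `σ`. -/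
def linkParam (p : Finset (Fin (n + 1)) → ℝ) (σ τ : Finset (Fin (n + 1))) : ℝ :=
  p τ * ∏ ν ∈ faces σ, p (ν ∪ τ)

/-- The join of the closed simplex on `σ` with a complex `K` on vertices outside `σ`. A simplex is
recognised as belonging to it by its part outside `σ`, which is empty or a simplex of `K`. -/
def simplexJoin (σ : Finset (Fin (n + 1))) (K : Finset (Finset (Fin (n + 1)))) :
    Finset (Finset (Fin (n + 1))) :=
  (simplexAll n).filter fun s => s ⊆ σ ∨ s \ σ ∈ K

/-- The simplices `σ` and `σ ∪ τ` for `τ ∈ W`, which generate the join of `σ` with `W`. -/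
def joinGenerators (σ : Finset (Fin (n + 1))) (W : Finset (Finset (Fin (n + 1)))) :
    Finset (Finset (Fin (n + 1))) :=
  insert σ (W.image (σ ∪ ·))

lemma clUp_joinGenerators : clUp (joinGenerators σ W) = simplexJoin σ (clUp W) := by
  ext s
  simp only [mem_clUp, joinGenerators, simplexJoin, mem_filter, mem_simplexAll, exists_mem_insert,
    exists_mem_image, sdiff_nonempty]
  have sdiff_iff (τ : Finset (Fin (n + 1))) : s \ σ ⊆ τ ↔ s ⊆ σ ∪ τ := sdiff_le_iff
  simp only [sdiff_iff]
  tauto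

lemma joinGenerators_subset_simplexAll (hσ : σ.Nonempty) :
    joinGenerators σ W ⊆ simplexAll n := by
  simp only [joinGenerators, insert_subset_iff, image_subset_iff, mem_simplexAll]
  exact ⟨hσ, fun τ _ => hσ.mono subset_union_left⟩

lemma joinGenerators_subset_iff (hW : W ⊆ delta' σ) :
    joinGenerators σ W ⊆ Y ↔ σ ∈ Y ∧ W ⊆ linkOf σ Y := by
  rw [joinGenerators, insert_subset_iff, image_subset_iff]
  refine and_congr_right fun _ => forall₂_congr fun τ hτ => ?_
  obtain ⟨hne, hτσ⟩ := mem_delta'.1 (hW hτ)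
  simp [linkOf, mem_simplexAll, hne, hτσ]

lemma filter_sdiff_eq (hτ : τ ∈ delta' σ) :
    {s ∈ simplexAll n | s \ σ = τ} = σ.powerset.image (· ∪ τ) := by
  obtain ⟨hne, hτσ⟩ := mem_delta'.1 hτ
  have hd : Disjoint τ σ := le_compl_iff_disjoint_right.1 hτσ
  ext s
  simp only [mem_filter, mem_simplexAll, mem_image, mem_powerset]
  constructor
  · rintro ⟨-, rfl⟩
    exact ⟨s ∩ σ, inter_subset_right, by rw [union_comm, sdiff_union_inter]⟩
  · rintro ⟨ν, hν, rfl⟩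
    refine ⟨hne.mono subset_union_right, ?_⟩
    rw [union_sdiff_distrib, sdiff_eq_empty_iff_subset.2 hν, empty_union, hd.sdiff_eq_left]

lemma faces_eq_erase_empty : faces σ = σ.powerset.erase ∅ := by
  ext ν
  simp [faces, mem_simplexAll, nonempty_iff_ne_empty]

lemma prod_filter_sdiff_eq (p : Finset (Fin (n + 1)) → ℝ) (hτ : τ ∈ delta' σ) :
    ∏ s ∈ simplexAll n with s \ σ = τ, p s = linkParam p σ τ := by
  have hd : Disjoint σ τ := (le_compl_iff_disjoint_left.1 (mem_delta'.1 hτ).2)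
  rw [filter_sdiff_eq hτ, prod_image, ← mul_prod_erase _ _ (empty_mem_powerset σ), empty_union,
    ← faces_eq_erase_empty, linkParam]
  intro ν hν μ hμ (h : ν ∪ τ = μ ∪ τ)
  rw [← union_sdiff_cancel_right (hd.mono_left (mem_powerset.1 hν)), h,
    union_sdiff_cancel_right (hd.mono_left (mem_powerset.1 hμ))]

lemma prod_simplexJoin (p : Finset (Fin (n + 1)) → ℝ) (hK : K ⊆ delta' σ) :
    ∏ s ∈ simplexJoin σ K, p s = (∏ ν ∈ faces σ, p ν) * ∏ τ ∈ K, linkParam p σ τ := by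
  have disjoint_parts : Disjoint (faces σ) {s ∈ simplexAll n | s \ σ ∈ K} := by
    refine disjoint_filter.2 fun s _ hsσ hsK => ?_
    have hne := (mem_delta'.1 (hK hsK)).1
    exact sdiff_nonempty.1 hne hsσ
  rw [simplexJoin, filter_or, ← faces, prod_union disjoint_parts, ← prod_fiberwise_eq_prod_filter]
  exact congrArg _ (prod_congr rfl fun τ hτ => prod_filter_sdiff_eq p (hK hτ))

lemma sum_lowerP_subset_linkOf (p : Finset (Fin (n + 1)) → ℝ) (hσ : σ.Nonempty)
    (hW : W ⊆ delta' σ) :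
    ∑ Y ∈ (simplexAll n).powerset with IsComplex Y ∧ σ ∈ Y ∧ W ⊆ linkOf σ Y,
        lowerP (simplexAll n) p Y
      = (∏ ν ∈ faces σ, p ν) * ∏ τ ∈ clUp W, linkParam p σ τ := by
  simp only [← joinGenerators_subset_iff hW]
  rw [sum_isComplex_lowerP p (joinGenerators_subset_simplexAll hσ), clUp_joinGenerators,
    prod_simplexJoin p ((isComplex_delta' σ).clUp_subset hW)]

lemma sum_lowerP_mem (p : Finset (Fin (n + 1)) → ℝ) (hσ : σ.Nonempty) :
    ∑ Y ∈ (simplexAll n).powerset with IsComplex Y ∧ σ ∈ Y, lowerP (simplexAll n) p Y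
      = ∏ ν ∈ faces σ, p ν := by
  simpa [clUp] using sum_lowerP_subset_linkOf p hσ (empty_subset _)

lemma sum_lowerP_linkOf_eq (p : Finset (Fin (n + 1)) → ℝ) (hσ : σ.Nonempty)
    {L : Finset (Finset (Fin (n + 1)))} (hL : L ⊆ delta' σ) :
    ∑ Y ∈ (simplexAll n).powerset with IsComplex Y ∧ σ ∈ Y ∧ linkOf σ Y = L,
        lowerP (simplexAll n) p Y
      = (∏ ν ∈ faces σ, p ν) * lowerP (delta' σ) (linkParam p σ) L := by
  refine eq_of_sum_Icc_eq (f := fun L => ∑ Y ∈ (simplexAll n).powerset with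
    IsComplex Y ∧ σ ∈ Y ∧ linkOf σ Y = L, lowerP (simplexAll n) p Y)
    (g := fun L => (∏ ν ∈ faces σ, p ν) * lowerP (delta' σ) (linkParam p σ) L)
    (fun W hW => ?_) hL
  have mem_Icc_iff (Y : Finset (Finset (Fin (n + 1)))) :
      linkOf σ Y ∈ Icc W (delta' σ) ↔ W ⊆ linkOf σ Y :=
    mem_Icc.trans (and_iff_left linkOf_subset_delta')
  have filter_and_and (P : Finset (Finset (Fin (n + 1))) → Prop) [DecidablePred P] :
      {Y ∈ (simplexAll n).powerset | IsComplex Y ∧ σ ∈ Y ∧ P Y}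
        = {Y ∈ {Y ∈ (simplexAll n).powerset | IsComplex Y ∧ σ ∈ Y} | P Y} := by
    simp only [filter_filter, and_assoc]
  calc
    _ = ∑ Y ∈ (simplexAll n).powerset with IsComplex Y ∧ σ ∈ Y ∧ W ⊆ linkOf σ Y,
          lowerP (simplexAll n) p Y := by
      simp only [filter_and_and, sum_fiberwise_eq_sum_filter, mem_Icc_iff]
    _ = (∏ ν ∈ faces σ, p ν) * ∏ τ ∈ clUp W, linkParam p σ τ :=
      sum_lowerP_subset_linkOf p hσ hW
    _ = _ := by
      rw [← mul_sum, sum_Icc_lowerP _ (isComplex_delta' σ) (delta'_subset_simplexAll σ) hW]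

end Complexes

theorem link_lower_general {n : ℕ} (p : Finset (Fin (n + 1)) → ℝ) {σ : Finset (Fin (n + 1))}
    (hσ : σ.Nonempty) (hq : ∏ ν ∈ faces σ, p ν ≠ 0) {L : Finset (Finset (Fin (n + 1)))}
    (hL : L ⊆ delta' σ) :
    lamLow p σ L = lowerP (delta' σ) (linkParam p σ) L := by
  rw [lamLow, sum_lowerP_linkOf_eq p hσ hL, sum_lowerP_mem p hσ, mul_div_cancel_left₀ _ hq]

/-- Links in the lower model: the conditional distribution of `Lk_Y(σ)` given
`σ ∈ Y` is the lower measure on subcomplexes of `Δ'` with parameters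
`p'_τ = p_τ · ∏_{∅≠ν⊆σ} p_{ν∪τ}`. -/
theorem link_lower (n : ℕ) (hn : 1 ≤ n) (p : Finset (Fin (n+1)) → ℝ)
    (hp : ∀ τ ∈ simplexAll n, 0 ≤ p τ ∧ p τ ≤ 1)
    (σ : Finset (Fin (n+1))) (hσ : σ ∈ simplexAll n)
    (hq : 0 < ∏ ν ∈ (simplexAll n).filter (fun ν => ν ⊆ σ), p ν) :
    ∀ L ∈ (delta' σ).powerset.filter (fun L => IsComplex L),
      lamLow p σ L
        = lowerP (delta' σ)
            (fun τ => p τ * ∏ ν ∈ (simplexAll n).filter (fun ν => ν ⊆ σ), p (ν ∪ τ)) L := by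
  intro L hL
  exact link_lower_general p (mem_simplexAll.1 hσ) hq.ne' (mem_powerset.1 (mem_filter.1 hL).1)
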